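/- arXiv:1505.04602 — 2 statements merged into one kernel-verified Lean document; each statement's English description precedes it below -/
import Mathlib

section
/- Let n ≥ 2 and let A be an (n-1) × m matrix over ZMod 2 whose columns are nonzero and pairwise distinct. Then the following are equivalent: (1) there exist a simple graph G on Fin n and a bijection ψ from the column index set Fin m onto the edge set of G such that for every subset X of Fin m, the columns of A indexed by X are linearly independent over ZMod 2 if and only if the spanning subgraph of G with edge set ψ(X) is acyclic; (2) m ≤ n(n-1)/2 and there exists an invertible (n-1) × (n-1) matrix P over ZMod 2 such that every column of P * A lies in C(n-1). -/
/-- The coding vector of an unordered pair of vertices of `Fin n`: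
for `e = {i,j}` with `i < j`, coordinate `k` is `1` iff `i ≤ k < j`. -/
def chi (n : ℕ) : Sym2 (Fin n) → (Fin (n - 1) → ZMod 2) :=
  Sym2.lift ⟨fun i j k => if min i.val j.val ≤ k.val ∧ k.val < max i.val j.val then 1 else 0,
    fun i j => by funext k; dsimp only; rw [min_comm, max_comm]⟩

/-- `Cseg N` is the set of nonzero vectors of `Fin N → ZMod 2` whose support is an
interval of consecutive indices (the consecutive 1's property). -/
def Cseg (N : ℕ) : Set (Fin N → ZMod 2) :=
  {v | v ≠ 0 ∧ ∃ a b : ℕ, ∀ k : Fin N, v k = 1 ↔ a ≤ k.val ∧ k.val < b}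

/-- A finite set of vectors is reduced if it is nonempty and every nonempty proper
subset has nonzero sum. -/
def IsReducedSet {N : ℕ} (S : Finset (Fin N → ZMod 2)) : Prop :=
  S.Nonempty ∧ ∀ A : Finset (Fin N → ZMod 2), A ⊂ S → A.Nonempty → ∑ v ∈ A, v ≠ 0

lemma aux_linindep {ι V : Type*} [AddCommGroup V] [Module (ZMod 2) V] (v : ι → V) (X : Set ι) :
    LinearIndepOn (ZMod 2) v X ↔
      ∀ T : Finset ι, (T : Set ι) ⊆ X → ∑ i ∈ T, v i = 0 → T = ∅ := by
  classical
  constructor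
  · intro h T hT hs
    by_contra hne
    apply (linearDepOn_iff (R := ZMod 2) (v := v) (s := X)).2 _ h
    refine ⟨Finsupp.indicator T (fun _ _ => 1), ?_, ?_, ?_⟩
    · rw [Finsupp.mem_supported]
      intro i hi
      apply hT
      by_contra hiT
      simp at hi
      exact hiT hi
    · rw [← hs]
      have hsub : (Finsupp.indicator T (fun _ _ => (1 : ZMod 2))).support ⊆ T :=
        Finsupp.support_indicator_subset _ _
      rw [Finset.sum_subset hsub]
      · apply Finset.sum_congr rfl
        intro i hi
        simp [Finsupp.indicator_apply, hi]
      · intro i hi h2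
        rw [Finsupp.notMem_support_iff.1 h2, zero_smul]
    · intro h0
      obtain ⟨i, hi⟩ := Finset.nonempty_iff_ne_empty.2 hne
      have := DFunLike.congr_fun h0 i
      simp [Finsupp.indicator_apply, hi] at this
  · intro h
    by_contra hn
    obtain ⟨f, hf, hs, hne⟩ := (linearDepOn_iff (R := ZMod 2) (v := v) (s := X)).1 hn
    apply hne
    rw [← Finsupp.support_eq_empty]
    apply h _ ((Finsupp.mem_supported _ _).1 hf)
    rw [← hs]
    apply Finset.sum_congr rfl
    intro i hi
    have h1 : f i ≠ 0 := Finsupp.mem_support_iff.1 hi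
    have h2 : ∀ a : ZMod 2, a ≠ 0 → a = 1 := by decide
    rw [h2 _ h1, one_smul]

lemma aux_ker {ι V W : Type*} [AddCommGroup V] [Module (ZMod 2) V] [AddCommGroup W]
    [Module (ZMod 2) W] (a : ι → V) (b : ι → W)
    (h : ∀ X : Set ι, LinearIndepOn (ZMod 2) a X ↔ LinearIndepOn (ZMod 2) b X) :
    ∀ S : Finset ι, ∑ i ∈ S, a i = 0 → ∑ i ∈ S, b i = 0 := by
  classical
  intro S
  induction S using Finset.strongInduction with
  | H S ih =>
    intro hS
    by_cases hE : S = ∅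
    · simp [hE]
    by_cases hT : ∃ T, T ⊂ S ∧ T ≠ ∅ ∧ ∑ i ∈ T, a i = 0
    · obtain ⟨T, hTS, hT0, hTs⟩ := hT
      have e1 := Finset.sum_sdiff (f := a) hTS.subset
      have e2 := Finset.sum_sdiff (f := b) hTS.subset
      rw [hTs, hS, add_zero] at e1
      have hlt : S \ T ⊂ S := by
        refine Finset.sdiff_ssubset hTS.subset (Finset.nonempty_iff_ne_empty.2 hT0)
      rw [ih _ hlt e1, ih _ hTS hTs, add_zero] at e2
      exact e2.symm
    · have hna : ¬ LinearIndepOn (ZMod 2) a (S : Set ι) := by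
        rw [aux_linindep]
        intro hh
        exact hE (hh S (le_refl _) hS)
      rw [h, aux_linindep] at hna
      push Not at hna
      obtain ⟨T, hTS, hTs, hT0⟩ := hna
      have hnb : ¬ LinearIndepOn (ZMod 2) b (T : Set ι) := by
        rw [aux_linindep]
        intro hh
        exact hT0.ne_empty (hh T (le_refl _) hTs)
      rw [← h, aux_linindep] at hnb
      push Not at hnb
      obtain ⟨U, hUT, hUs, hU0⟩ := hnb
      have hUT' : U ⊆ T := by exact_mod_cast hUT
      have hTS' : T ⊆ S := by exact_mod_cast hTS
      have hUS : U = S := by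
        by_contra hne
        exact hT ⟨U, (hUT'.trans hTS').ssubset_of_ne hne, hU0.ne_empty, hUs⟩
      have : T = S := hTS'.antisymm (hUS ▸ hUT')
      rw [← this]; exact hTs

lemma aux_ker' {m : ℕ} {V W : Type*} [AddCommGroup V] [Module (ZMod 2) V] [AddCommGroup W]
    [Module (ZMod 2) W] (a : Fin m → V) (b : Fin m → W)
    (h : ∀ X : Set (Fin m), LinearIndepOn (ZMod 2) a X ↔ LinearIndepOn (ZMod 2) b X) :
    LinearMap.ker (Fintype.linearCombination (ZMod 2) a) ≤
      LinearMap.ker (Fintype.linearCombination (ZMod 2) b) := by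
  classical
  have key : ∀ (U : Type _) [AddCommGroup U] [Module (ZMod 2) U] (u : Fin m → U)
      (c : Fin m → ZMod 2), Fintype.linearCombination (ZMod 2) u c =
        ∑ i ∈ Finset.univ.filter (fun i => c i = 1), u i := by
    intro U _ _ u c
    rw [Fintype.linearCombination_apply, Finset.sum_filter]
    apply Finset.sum_congr rfl
    intro i _
    have h2 : ∀ a : ZMod 2, a = 0 ∨ a = 1 := by decide
    rcases h2 (c i) with h | h <;> simp [h]
  have key2 : ∀ (U : Type _) [AddCommGroup U] [Module (ZMod 2) U] (u : Fin m → U)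
      (c : Fin m → ZMod 2), Fintype.linearCombination (ZMod 2) u c =
        ∑ i ∈ Finset.univ.filter (fun i => c i = 1), u i := by
    intro U _ _ u c
    rw [Fintype.linearCombination_apply, Finset.sum_filter]
    apply Finset.sum_congr rfl
    intro i _
    have h2 : ∀ a : ZMod 2, a = 0 ∨ a = 1 := by decide
    rcases h2 (c i) with h | h <;> simp [h]
  intro c hc
  rw [LinearMap.mem_ker] at hc ⊢
  rw [key] at hc
  rw [key2]
  exact aux_ker a b h _ hc

lemma aux_equiv {m N : ℕ} (a b : Fin m → (Fin N → ZMod 2))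
    (h : ∀ X : Set (Fin m), LinearIndepOn (ZMod 2) a X ↔ LinearIndepOn (ZMod 2) b X) :
    ∃ g : (Fin N → ZMod 2) ≃ₗ[ZMod 2] (Fin N → ZMod 2), ∀ i, g (a i) = b i := by
  classical
  set f := Fintype.linearCombination (ZMod 2) a with hf
  set f' := Fintype.linearCombination (ZMod 2) b with hf'
  have hk : LinearMap.ker f = LinearMap.ker f' :=
    le_antisymm (aux_ker' a b h) (aux_ker' b a (fun X => (h X).symm))
  let E := f.quotKerEquivRange.symm ≪≫ₗ Submodule.quotEquivOfEq _ _ hk ≪≫ₗ f'.quotKerEquivRange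
  obtain ⟨g, hg⟩ := Submodule.exists_linearEquiv_restrict_eq E
  refine ⟨g, fun i => ?_⟩
  have e1 : f (Pi.single i 1) = a i := by simp [hf]
  have e2 : f' (Pi.single i 1) = b i := by simp [hf']
  have := hg ⟨f (Pi.single i 1), LinearMap.mem_range_self _ _⟩
  rw [← e1, ← e2]
  rw [← this]
  have e3 : f.quotKerEquivRange.symm ⟨f (Pi.single i 1), LinearMap.mem_range_self _ _⟩
      = Submodule.Quotient.mk (Pi.single i 1) := by
    rw [LinearEquiv.symm_apply_eq]
    rfl
  simp only [E, LinearEquiv.trans_apply, e3]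
  rfl

/-- The indicator vector of the coordinates below `i`. -/
def fvec (n : ℕ) (i : Fin n) : Fin (n - 1) → ZMod 2 := fun k => if k.val < i.val then 1 else 0

lemma chi_mk (n : ℕ) (i j : Fin n) : chi n s(i, j) = fvec n i + fvec n j := by
  funext k
  simp only [chi, Sym2.lift_mk, fvec, Pi.add_apply]
  have h11 : (1 : ZMod 2) + 1 = 0 := by decide
  split_ifs <;> first | omega | simp [h11]

lemma aux_functional (n : ℕ) (hn : 2 ≤ n) (g : Fin n → ZMod 2) :
    ∃ φ : (Fin (n - 1) → ZMod 2) →ₗ[ZMod 2] ZMod 2, ∀ i j, φ (chi n s(i, j)) = g i + g j := by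
  classical
  obtain ⟨N, rfl⟩ : ∃ N, n = N + 1 := ⟨n - 1, by omega⟩
  have hcc : ∀ x : ZMod 2, x + x = 0 := by decide
  let φ : (Fin (N + 1 - 1) → ZMod 2) →ₗ[ZMod 2] ZMod 2 :=
    Fintype.linearCombination (ZMod 2) (fun k : Fin N => g k.succ + g k.castSucc)
  have hφ : ∀ i, φ (fvec (N + 1) i) = g i + g 0 := by
    intro i
    simp only [φ]
    induction i using Fin.induction with
    | zero => simp [fvec, Fintype.linearCombination_apply, hcc]
    | succ i ih =>
      have : fvec (N + 1) i.succ = fvec (N + 1) i.castSucc +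
          (Pi.single (show Fin (N + 1 - 1) from i) 1 : Fin (N + 1 - 1) → ZMod 2) := by
        funext k
        have hk : (k : Fin N) = i ↔ k.val = i.val := Fin.ext_iff
        simp only [fvec, Pi.add_apply, Fin.val_succ, Fin.val_castSucc, Pi.single_apply, hk]
        split_ifs <;> first | omega | simp
      rw [this, map_add, ih]
      have e : (Fintype.linearCombination (ZMod 2) (fun k : Fin N => g k.succ + g k.castSucc))
        (Pi.single i 1) = g i.succ + g i.castSucc := by simp
      erw [e]
      generalize g i.succ = x
      generalize g i.castSucc = y
      generalize g 0 = z
      revert x y z; decide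
  refine ⟨φ, fun i j => ?_⟩
  rw [chi_mk, map_add, hφ, hφ]
  generalize g i = x
  generalize g j = y
  generalize g 0 = z
  revert x y z; decide

lemma aux_walk {n : ℕ} {G : SimpleGraph (Fin n)} {u v : Fin n} (p : G.Walk u v) :
    (p.edges.map (chi n)).sum = fvec n u + fvec n v := by
  have hcc : ∀ x : Fin (n - 1) → ZMod 2, x + x = 0 := by
    intro x; funext k; exact (by decide : ∀ x : ZMod 2, x + x = 0) (x k)
  induction p with
  | nil => simp [hcc]
  | @cons u v w h p ih =>
    simp only [SimpleGraph.Walk.edges_cons, List.map_cons, List.sum_cons, ih, chi_mk]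
    rw [add_assoc, ← add_assoc (fvec n v), hcc, zero_add]

lemma aux_graph (n m : ℕ) (hn : 2 ≤ n) (ψ : Fin m → Sym2 (Fin n)) (hψ : Function.Injective ψ)
    (hd : ∀ i, ¬ (ψ i).IsDiag) (X : Set (Fin m)) :
    LinearIndepOn (ZMod 2) (fun i => chi n (ψ i)) X ↔
      (SimpleGraph.fromEdgeSet (ψ '' X)).IsAcyclic := by
  classical
  rw [aux_linindep]
  constructor
  · intro h v p hp
    have hmem : ∀ e ∈ p.edges, e ∈ ψ '' X := by
      intro e he
      have := p.edges_subset_edgeSet he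
      rw [SimpleGraph.edgeSet_fromEdgeSet] at this
      exact this.1
    have hT := h (Finset.univ.filter (fun i => ψ i ∈ p.edges)) ?_ ?_
    · obtain ⟨e, he⟩ := p.edges.exists_mem_of_ne_nil (by simp [hp.not_nil])
      obtain ⟨i, hi, rfl⟩ := hmem e he
      have : i ∈ (Finset.univ.filter (fun i => ψ i ∈ p.edges)) := by simp [he]
      rw [hT] at this
      simp at this
    · intro i hi
      simp at hi
      obtain ⟨j, hj, hji⟩ := hmem _ hi
      rwa [← hψ hji]
    · have himg : (Finset.univ.filter (fun i => ψ i ∈ p.edges)).image ψ = p.edges.toFinset := by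
        ext e
        simp only [Finset.mem_image, Finset.mem_filter, Finset.mem_univ, true_and,
          List.mem_toFinset]
        constructor
        · rintro ⟨i, hi, rfl⟩; exact hi
        · intro he
          obtain ⟨i, hi, rfl⟩ := hmem e he
          exact ⟨i, he, rfl⟩
      have h1 := Finset.sum_image (s := Finset.univ.filter (fun i => ψ i ∈ p.edges)) (g := ψ)
        (f := chi n) (fun x _ y _ hxy => hψ hxy)
      rw [← h1, himg, List.sum_toFinset _ hp.edges_nodup, aux_walk]
      funext k; exact (by decide : ∀ x : ZMod 2, x + x = 0) _
  · intro hac T hTX hs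
    by_contra hne
    obtain ⟨t, ht⟩ := Finset.nonempty_iff_ne_empty.2 hne
    rw [SimpleGraph.isAcyclic_iff_forall_isBridge] at hac
    have hE : ∀ i ∈ T, ψ i ∈ (SimpleGraph.fromEdgeSet (ψ '' X)).edgeSet := by
      intro i hi
      rw [SimpleGraph.edgeSet_fromEdgeSet]
      exact ⟨⟨i, hTX hi, rfl⟩, hd i⟩
    have hb := hac (hE t ht)
    obtain ⟨u, v, huv⟩ : ∃ u v, ψ t = s(u, v) := by
      induction h : ψ t with
      | h u v => exact ⟨u, v, rfl⟩
    rw [huv, SimpleGraph.isBridge_iff] at hb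
    set H := (SimpleGraph.fromEdgeSet (ψ '' X)).deleteEdges {s(u, v)} with hH
    obtain ⟨φ, hφ⟩ := aux_functional n hn (fun w => if H.Reachable u w then 1 else 0)
    have h0 : φ (∑ i ∈ T, chi n (ψ i)) = 0 := by rw [hs, map_zero]
    rw [map_sum, Finset.sum_eq_single_of_mem t ht] at h0
    · rw [huv, hφ] at h0
      simp [hb] at h0
    · intro i hi hit
      have h1 : ψ i ≠ s(u, v) := fun h => hit (hψ (h.trans huv.symm))
      have h2 : ψ i ∈ H.edgeSet := by
        rw [hH, SimpleGraph.edgeSet_deleteEdges]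
        exact ⟨hE i hi, h1⟩
      revert h2
      induction ψ i with
      | h x y =>
        intro h2
        rw [SimpleGraph.mem_edgeSet] at h2
        rw [hφ]
        have : H.Reachable u x ↔ H.Reachable u y :=
          ⟨fun h => h.trans h2.reachable, fun h => h.trans h2.symm.reachable⟩
        simp only [this]
        exact (by decide : ∀ x : ZMod 2, x + x = 0) _

lemma chi_mem_Cseg (n : ℕ) (e : Sym2 (Fin n)) (he : ¬ e.IsDiag) : chi n e ∈ Cseg (n - 1) := by
  induction e with
  | h i j =>
    rw [Sym2.mk_isDiag_iff] at he
    have hij : i.val ≠ j.val := fun h => he (Fin.ext h)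
    have hc : ∀ k : Fin (n - 1), chi n s(i, j) k = 1 ↔
        min i.val j.val ≤ k.val ∧ k.val < max i.val j.val := by
      intro k
      simp only [chi, Sym2.lift_mk]
      split_ifs with h
      · exact ⟨fun _ => h, fun _ => rfl⟩
      · exact ⟨fun h' => absurd h' (by decide), fun h' => absurd h' h⟩
    refine ⟨fun h0 => ?_, _, _, hc⟩
    have := (hc ⟨min i.val j.val, by omega⟩).2 ⟨le_refl _, by simp only []; omega⟩
    rw [h0] at this
    simp at this

lemma Cseg_eq_chi (n : ℕ) (v : Fin (n - 1) → ZMod 2) (hv : v ∈ Cseg (n - 1)) :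
    ∃ e : Sym2 (Fin n), ¬ e.IsDiag ∧ chi n e = v := by
  obtain ⟨h0, a, b, hab⟩ := hv
  have h2 : ∀ a : ZMod 2, a = 0 ∨ a = 1 := by decide
  obtain ⟨k, hk⟩ : ∃ k, v k ≠ 0 := by
    by_contra hh
    push Not at hh
    exact h0 (funext hh)
  have hk1 := (hab k).1 ((h2 _).resolve_left hk)
  have hkn := k.isLt
  refine ⟨s(⟨a, by omega⟩, ⟨min b (n - 1), by omega⟩), ?_, ?_⟩
  · rw [Sym2.mk_isDiag_iff, Fin.ext_iff]
    simp only []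
    omega
  · funext l
    have hl := l.isLt
    have habl := hab l
    simp only [chi, Sym2.lift_mk]
    split_ifs with h
    · exact (habl.2 (by omega)).symm
    · refine ((h2 (v l)).resolve_right (fun h1 => h ?_)).symm
      have := habl.1 h1
      omega

theorem stmt13 (n m : ℕ) (hn : 2 ≤ n) (A : Matrix (Fin (n - 1)) (Fin m) (ZMod 2))
    (h0 : ∀ j, A.transpose j ≠ 0) (hinj : Function.Injective A.transpose) :
    (∃ (G : SimpleGraph (Fin n)) (ψ : Fin m → Sym2 (Fin n)),
        Function.Injective ψ ∧ Set.range ψ = G.edgeSet ∧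
          ∀ X : Set (Fin m),
            (LinearIndependent (ZMod 2) (fun x : X => A.transpose x.val) ↔
              (SimpleGraph.fromEdgeSet (ψ '' X)).IsAcyclic)) ↔
      (m ≤ n * (n - 1) / 2 ∧
        ∃ P : Matrix (Fin (n - 1)) (Fin (n - 1)) (ZMod 2),
          IsUnit P ∧ ∀ j, (P * A).transpose j ∈ Cseg (n - 1)) := by
  have hPcol : ∀ (P : Matrix (Fin (n - 1)) (Fin (n - 1)) (ZMod 2)) j,
      (P * A).transpose j = P.mulVec (A.transpose j) := by
    intro P j
    funext i
    rfl
  constructor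
  · rintro ⟨G, ψ, hψ, hr, hX⟩
    have hd : ∀ i, ¬ (ψ i).IsDiag := fun i =>
      G.not_isDiag_of_mem_edgeSet (hr ▸ Set.mem_range_self i)
    refine ⟨?_, ?_⟩
    · classical
      have h1 := G.card_edgeFinset_le_card_choose_two
      have h2 : Fintype.card (Fin m) ≤ G.edgeFinset.card := by
        rw [← Finset.card_univ]
        apply Finset.card_le_card_of_injOn ψ
        · intro i _
          simp only [SimpleGraph.coe_edgeFinset]
          exact hr ▸ Set.mem_range_self i
        · exact hψ.injOn
      rw [Fintype.card_fin] at h1 h2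
      rw [Nat.choose_two_right] at h1
      omega
    · obtain ⟨g, hg⟩ := aux_equiv (fun i => A.transpose i) (fun i => chi n (ψ i))
        (fun X => (hX X).trans (aux_graph n m hn ψ hψ hd X).symm)
      refine ⟨LinearMap.toMatrix' g.toLinearMap, ?_, ?_⟩
      · exact (LinearMap.isUnit_toMatrix'_iff).2
          ((LinearMap.isUnit_iff_ker_eq_bot _).2 (LinearMap.ker_eq_bot.2 g.injective))
      · intro j
        rw [hPcol, ← Matrix.toLin'_apply, Matrix.toLin'_toMatrix']
        have h1 : g.toLinearMap (A.transpose j) = chi n (ψ j) := hg j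
        rw [h1]
        exact chi_mem_Cseg n _ (hd j)
  · rintro ⟨-, P, hP, hC⟩
    choose ψ hd hψe using fun j => Cseg_eq_chi n _ (hC j)
    have hPinj : Function.Injective P.mulVec := Matrix.mulVec_injective_iff_isUnit.2 hP
    have hψ : Function.Injective ψ := by
      intro i j hij
      have h1 := hψe i
      rw [hij, hψe j, hPcol, hPcol] at h1
      exact (hinj (hPinj h1)).symm
    refine ⟨SimpleGraph.fromEdgeSet (Set.range ψ), ψ, hψ, ?_, ?_⟩
    · rw [SimpleGraph.edgeSet_fromEdgeSet]
      ext e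
      constructor
      · rintro ⟨i, rfl⟩
        exact ⟨⟨i, rfl⟩, hd i⟩
      · exact fun h => h.1
    · intro X
      rw [← aux_graph n m hn ψ hψ hd X]
      have e : (fun i => chi n (ψ i)) = fun i => P.mulVecLin (A.transpose i) := by
        funext i
        rw [hψe, hPcol]; rfl
      rw [e]
      exact (LinearMap.linearIndependent_iff_of_injOn P.mulVecLin hPinj.injOn).symm
end

section
/- Let n ≥ 2, let G be a simple graph on Fin n, and let S be a nonempty finite subset of the edge set of G. Then the edges in S form a path in G (i.e., there exist distinct vertices u, v and a path walk in G from u to v whose edge set is exactly S) if and only if ∑_{e ∈ S} χ(e) ∈ C(n-1) and the set {χ(e) : e ∈ S} is reduced. -/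
/-- Boundary functional at the vertex `u`. -/
def bdL (n : ℕ) (u : Fin n) (x : Fin (n - 1) → ZMod 2) : ZMod 2 :=
  (if h : 1 ≤ u.val then x ⟨u.val - 1, by have := u.isLt; omega⟩ else 0) +
  (if h : u.val < n - 1 then x ⟨u.val, h⟩ else 0)

lemma bdL_zero (n : ℕ) (u : Fin n) : bdL n u 0 = 0 := by
  unfold bdL; split_ifs <;> simp

lemma bdL_add (n : ℕ) (u : Fin n) (x y) : bdL n u (x + y) = bdL n u x + bdL n u y := by
  unfold bdL; split_ifs <;> simp <;> ring

lemma bdL_sum (n : ℕ) (u : Fin n) {ι : Type*} (s : Finset ι) (f : ι → (Fin (n - 1) → ZMod 2)) :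
    bdL n u (∑ i ∈ s, f i) = ∑ i ∈ s, bdL n u (f i) := by
  classical
  induction s using Finset.induction_on with
  | empty => simp [bdL_zero]
  | insert a s ha ih => rw [Finset.sum_insert ha, Finset.sum_insert ha, bdL_add, ih]

lemma chi_mk_s15 (n : ℕ) (i j : Fin n) (k : Fin (n - 1)) :
    chi n s(i, j) k = (if k.val < i.val then 1 else 0) + (if k.val < j.val then 1 else 0) := by
  have h2 : (1 : ZMod 2) + 1 = 0 := by decide
  show (if min i.val j.val ≤ k.val ∧ k.val < max i.val j.val then (1 : ZMod 2) else 0) = _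
  split_ifs <;> first | omega | simp [h2]

lemma chi_tri (n : ℕ) (i j l : Fin n) : chi n s(i, j) + chi n s(j, l) = chi n s(i, l) := by
  have h2 : (1 : ZMod 2) + 1 = 0 := by decide
  funext k
  rw [Pi.add_apply, chi_mk_s15, chi_mk_s15, chi_mk_s15]
  split_ifs <;> first | omega | simp [h2]

lemma bdL_chi (n : ℕ) (u i j : Fin n) :
    bdL n u (chi n s(i, j)) = (if u = i then 1 else 0) + (if u = j then 1 else 0) := by
  have h2 : (1 : ZMod 2) + 1 = 0 := by decide
  have := u.isLt
  have := i.isLt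
  have := j.isLt
  have h3 : ∀ v : Fin n, (if u = v then (1 : ZMod 2) else 0)
      = (if u.val - 1 < v.val ∧ 1 ≤ u.val then 1 else 0) + (if u.val < v.val then 1 else 0)
        + (if u.val = 0 then 1 else 0) := by
    intro v
    simp only [Fin.ext_iff]
    have := v.isLt
    split_ifs <;> first | omega | simp [h2]
  rw [h3 i, h3 j]
  unfold bdL
  simp only [chi_mk_s15]
  split_ifs <;> first | omega | simp [h2] | decide

lemma bdL_chi_mem (n : ℕ) (u : Fin n) (e : Sym2 (Fin n)) (he : ¬ e.IsDiag) :
    bdL n u (chi n e) = if u ∈ e then 1 else 0 := by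
  induction e with
  | _ i j =>
    rw [bdL_chi]
    simp only [Sym2.mk_isDiag_iff, Sym2.mem_iff] at *
    split_ifs <;> simp_all

lemma chi_inj (n : ℕ) (e f : Sym2 (Fin n)) (he : ¬ e.IsDiag) (hf : ¬ f.IsDiag)
    (h : chi n e = chi n f) : e = f := by
  apply Sym2.ext
  intro u
  have h1 := bdL_chi_mem n u e he
  rw [h, bdL_chi_mem n u f hf] at h1
  split_ifs at h1 <;> simp_all

lemma sum_walk (n : ℕ) (G : SimpleGraph (Fin n)) {u v : Fin n} (w : G.Walk u v)
    (hw : w.IsPath) : ∑ e ∈ w.edges.toFinset, chi n e = chi n s(u, v) := by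
  rw [List.sum_toFinset _ hw.isTrail.edges_nodup]
  clear hw
  induction w with
  | nil =>
    funext k
    have h2 : (1 : ZMod 2) + 1 = 0 := by decide
    rw [chi_mk_s15]
    split_ifs <;> simp [h2]
  | cons h p ih =>
    rw [SimpleGraph.Walk.edges_cons, List.map_cons, List.sum_cons, ih, chi_tri]

lemma path_indep (n : ℕ) (G : SimpleGraph (Fin n)) {u v : Fin n} (w : G.Walk u v)
    (hw : w.IsPath) (B : Finset (Sym2 (Fin n))) (hB : ∀ e ∈ B, e ∈ w.edges)
    (h0 : ∑ e ∈ B, chi n e = 0) : B = ∅ := by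
  induction w with
  | nil => exact Finset.eq_empty_of_forall_notMem (fun e he => by simpa using hB e he)
  | @cons a b c h p ih =>
    rw [SimpleGraph.Walk.cons_isPath_iff] at hw
    have hnot : s(a, b) ∉ B := by
      intro hmem
      have h1 := bdL_sum n a B (chi n)
      rw [h0, bdL_zero, Finset.sum_eq_single_of_mem _ hmem, bdL_chi_mem] at h1
      · simp at h1
      · simpa using h.ne
      · intro e he hne
        have h2 := hB e he
        rw [SimpleGraph.Walk.edges_cons, List.mem_cons] at h2
        have h3 : e ∈ p.edges := h2.resolve_left hne
        rw [bdL_chi_mem _ _ _ (G.not_isDiag_of_mem_edgeSet (p.edges_subset_edgeSet h3)), if_neg]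
        intro h4
        exact hw.2 (p.mem_support_of_mem_edges h3 h4)
    apply ih hw.1
    intro e he
    have h2 := hB e he
    rw [SimpleGraph.Walk.edges_cons, List.mem_cons] at h2
    exact h2.resolve_left (fun h => hnot (h ▸ he))

lemma reach (n : ℕ) (S : Finset (Sym2 (Fin n))) (hS : ∀ e ∈ S, ¬ e.IsDiag) (a b : Fin n)
    (h : ∑ e ∈ S, chi n e = chi n s(a, b)) :
    (SimpleGraph.fromEdgeSet (S : Set (Sym2 (Fin n)))).Reachable a b := by
  classical
  set H := SimpleGraph.fromEdgeSet (S : Set (Sym2 (Fin n))) with hH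
  by_contra hab
  let K : Finset (Fin n) := Finset.univ.filter (fun u => H.Reachable a u)
  have key : ∀ i j, ∑ u ∈ K, bdL n u (chi n s(i, j))
      = (if H.Reachable a i then 1 else 0) + (if H.Reachable a j then 1 else 0) := by
    intro i j
    simp only [bdL_chi, Finset.sum_add_distrib, Finset.sum_ite_eq', K, Finset.mem_filter,
      Finset.mem_univ, true_and]
  have h1 : ∑ u ∈ K, bdL n u (∑ e ∈ S, chi n e) = 0 := by
    simp only [bdL_sum]
    rw [Finset.sum_comm]
    apply Finset.sum_eq_zero
    intro e he
    induction e with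
    | _ i j =>
      rw [key]
      have hadj : H.Adj i j := by
        rw [hH, SimpleGraph.fromEdgeSet_adj]
        exact ⟨he, by simpa using hS _ he⟩
      have : H.Reachable a i ↔ H.Reachable a j :=
        ⟨fun h => h.trans hadj.reachable, fun h => h.trans hadj.symm.reachable⟩
      have h2 : (1 : ZMod 2) + 1 = 0 := by decide
      by_cases hi : H.Reachable a j <;> simp [this, hi, h2]
  rw [h, key, if_pos (SimpleGraph.Reachable.refl a), if_neg hab] at h1
  simp at h1

lemma mem_Cseg_iff (n : ℕ) (x : Fin (n - 1) → ZMod 2) :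
    x ∈ Cseg (n - 1) ↔ ∃ a b : Fin n, a ≠ b ∧ x = chi n s(a, b) := by
  constructor
  · rintro ⟨h0, a, b, h⟩
    obtain ⟨k, hk⟩ := Function.ne_iff.1 h0
    have h01 : ∀ z : ZMod 2, z ≠ 0 → z = 1 := by decide
    have hk1 := (h k).1 (h01 _ hk)
    have := k.isLt
    refine ⟨⟨a, by omega⟩, ⟨min b (n - 1), by omega⟩, ?_, ?_⟩
    · rw [Ne, Fin.ext_iff]
      simp only
      omega
    · funext l
      have := l.isLt
      have hl := h l
      show x l = (if min a (min b (n - 1)) ≤ l.val ∧ l.val < max a (min b (n - 1)) then 1 else 0)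
      split_ifs with hc
      · exact hl.2 (by omega)
      · by_contra hne
        have := hl.1 (h01 _ hne)
        omega
  · rintro ⟨a, b, hab, rfl⟩
    refine ⟨?_, min a.val b.val, max a.val b.val, ?_⟩
    · intro h
      have h1 := bdL_chi_mem n a s(a, b) (by simpa using hab)
      rw [h, bdL_zero] at h1
      simp at h1
    · intro k
      show (if min a.val b.val ≤ k.val ∧ k.val < max a.val b.val then (1 : ZMod 2) else 0) = 1 ↔ _
      split_ifs with hc
      · simpa using hc
      · exact ⟨fun h => absurd h (by decide), fun h => absurd h hc⟩

theorem stmt15 (n : ℕ) (hn : 2 ≤ n) (G : SimpleGraph (Fin n))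
    (S : Finset (Sym2 (Fin n))) (hSne : S.Nonempty) (hS : ↑S ⊆ G.edgeSet) :
    (∃ (u v : Fin n) (w : G.Walk u v), u ≠ v ∧ w.IsPath ∧ w.edges.toFinset = S) ↔
      ((∑ e ∈ S, chi n e) ∈ Cseg (n - 1) ∧ IsReducedSet (S.image (chi n))) := by
  classical
  have hd : ∀ e ∈ S, ¬ e.IsDiag := fun e he => G.not_isDiag_of_mem_edgeSet (hS he)
  have hinj : Set.InjOn (chi n) (S : Set (Sym2 (Fin n))) :=
    fun e he f hf h => chi_inj n e f (hd e he) (hd f hf) h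
  constructor
  · rintro ⟨u, v, w, huv, hw, rfl⟩
    refine ⟨?_, hSne.image _, ?_⟩
    · rw [mem_Cseg_iff]
      exact ⟨u, v, huv, sum_walk n G w hw⟩
    · intro A hA hne h0
      obtain ⟨B, hB, rfl⟩ := Finset.subset_image_iff.1 hA.1
      rw [Finset.sum_image (fun e he f hf h => hinj (hB he) (hB hf) h)] at h0
      have := path_indep n G w hw B (fun e he => by simpa using hB he) h0
      subst this
      simp at hne
  · rintro ⟨hC, -, hred⟩
    obtain ⟨a, b, hab, hsum⟩ := (mem_Cseg_iff n _).1 hC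
    obtain ⟨w0⟩ := reach n S hd a b hsum
    have hle : SimpleGraph.fromEdgeSet (S : Set (Sym2 (Fin n))) ≤ G := by
      intro i j hij
      rw [SimpleGraph.fromEdgeSet_adj] at hij
      exact hS hij.1
    obtain ⟨p, hp⟩ := w0.toPath
    have hpG : (p.mapLe hle).IsPath := hp.mapLe hle
    refine ⟨a, b, p.mapLe hle, hab, hpG, ?_⟩
    set P := (p.mapLe hle).edges.toFinset with hP
    have hPS : P ⊆ S := by
      intro e he
      rw [hP, List.mem_toFinset, SimpleGraph.Walk.edges_mapLe_eq_edges] at he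
      have := p.edges_subset_edgeSet he
      rw [SimpleGraph.edgeSet_fromEdgeSet] at this
      exact this.1
    have hsP : ∑ e ∈ P, chi n e = chi n s(a, b) := sum_walk n G _ hpG
    have hs0 : ∑ e ∈ S \ P, chi n e = 0 := by
      have := Finset.sum_sdiff hPS (f := chi n)
      rw [hsP, hsum] at this
      simpa using this
    by_contra hne
    have hPne : P.Nonempty := by
      rw [Finset.nonempty_iff_ne_empty]
      intro h
      rw [h, Finset.sum_empty] at hsP
      have h1 := bdL_chi_mem n a s(a, b) (by simpa using hab)
      rw [← hsP, bdL_zero] at h1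
      simp at h1
    have hDne : (S \ P).Nonempty := by
      rw [Finset.sdiff_nonempty]
      exact fun h => hne (Finset.Subset.antisymm hPS h)
    refine hred ((S \ P).image (chi n)) ?_ (hDne.image _) ?_
    · refine ⟨Finset.image_subset_image Finset.sdiff_subset, fun hsub => ?_⟩
      obtain ⟨e, he⟩ := hPne
      obtain ⟨f, hf, hfe⟩ := Finset.mem_image.1 (hsub (Finset.mem_image_of_mem _ (hPS he)))
      rw [Finset.mem_sdiff] at hf
      have := hinj hf.1 (hPS he) hfe
      exact hf.2 (this ▸ he)
    · rw [Finset.sum_image (fun e he f hf h =>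
        hinj (Finset.sdiff_subset he) (Finset.sdiff_subset hf) h)]
      exact hs0
end
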